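/- Let A ∈ ℝ^{p×p}, G ∈ ℝ^{p×m}, and let H ∈ ℝ^{m×m} be a reflexive generalized inverse of GᵀG, i.e. (GᵀG)H(GᵀG) = GᵀG and H(GᵀG)H = H. Set Π = G H Gᵀ and Γ̂ = Π ((A + Aᵀ)/2) Π. Then Γ̂ belongs to S(G) = {G Ψ Gᵀ : Ψ ∈ ℝ^{m×m} symmetric} and achieves the infimum of ‖A − Γ‖ over Γ ∈ S(G), i.e. ‖A − Γ̂‖ ≤ ‖A − G Ψ Gᵀ‖ for every symmetric Ψ ∈ ℝ^{m×m}. -/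

import Mathlib

/-!
Cancelling `Gᴴ` in `(GᴴG) H (GᴴG) = GᴴG` gives `Π G = G` for `Π = G H Gᴴ`. Hence `Π Πᴴ = Πᴴ`, and
since the left side is self-adjoint, `Π` is the orthogonal projection onto the column space of `G`
even when `H` is not self-adjoint. In the real case every `Γ ∈ S(G)` therefore satisfies
`Π Γ Π = Γ`, so `⟨Π B Π, Γ⟩ = ⟨B, Γ⟩` for all `B`; as `Γ` is symmetric, `⟨A, Γ⟩` depends only on the
symmetric part of `A`. Taking that part for `B`, the residual `A - Γ̂` is orthogonal to `S(G)`, and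
Pythagoras gives minimality.
-/

open Matrix

/-- Frobenius norm of a matrix: `‖A‖ = √(tr (A Aᵀ))`. -/
noncomputable def frobNorm {a : Type*} [Fintype a] (A : Matrix a a ℝ) : ℝ :=
  Real.sqrt (Matrix.trace (A * Aᵀ))

section GeneralizedInverse

variable {R n m : Type*} [Ring R] [PartialOrder R] [StarRing R] [StarOrderedRing R]
  [NoZeroDivisors R] [Fintype n] [Fintype m] {G : Matrix n m R} {H : Matrix m m R}

theorem mul_mul_conjTranspose_mul_self (hH : (Gᴴ * G) * H * (Gᴴ * G) = Gᴴ * G) :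
    G * H * Gᴴ * G = G := by
  classical
  have hcancel : Gᴴ * G * (H * (Gᴴ * G) - 1) = 0 := by
    rw [Matrix.mul_sub, ← Matrix.mul_assoc, hH, Matrix.mul_one, sub_self]
  rw [conjTranspose_mul_self_mul_eq_zero, Matrix.mul_sub, Matrix.mul_one, sub_eq_zero] at hcancel
  simpa only [Matrix.mul_assoc] using hcancel

theorem isHermitian_mul_mul_conjTranspose (hH : (Gᴴ * G) * H * (Gᴴ * G) = Gᴴ * G) :
    (G * H * Gᴴ).IsHermitian := by
  have hmul : G * H * Gᴴ * (G * H * Gᴴ)ᴴ = (G * H * Gᴴ)ᴴ := by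
    simp only [conjTranspose_mul, conjTranspose_conjTranspose]
    rw [← Matrix.mul_assoc, mul_mul_conjTranspose_mul_self hH]
  rw [← isHermitian_conjTranspose_iff, ← hmul]
  exact isHermitian_mul_conjTranspose_self _

end GeneralizedInverse

section SymmetricCongruence

variable {R n m : Type*} [CommSemiring R] [Fintype m]

/-- The space `S(G)` of the matrices `G Ψ Gᵀ` with `Ψ` symmetric. -/
def symmCongruence (G : Matrix n m R) : Submodule R (Matrix n n R) where
  carrier := {Γ | ∃ Ψ : Matrix m m R, Ψ.IsSymm ∧ Γ = G * Ψ * Gᵀ}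
  zero_mem' := ⟨0, isSymm_zero, by rw [Matrix.mul_zero, Matrix.zero_mul]⟩
  add_mem' := by
    rintro _ _ ⟨Ψ, hΨ, rfl⟩ ⟨Φ, hΦ, rfl⟩
    exact ⟨Ψ + Φ, hΨ.add hΦ, by rw [Matrix.mul_add, Matrix.add_mul]⟩
  smul_mem' := by
    rintro c _ ⟨Ψ, hΨ, rfl⟩
    exact ⟨c • Ψ, hΨ.smul c, by rw [Matrix.mul_smul, Matrix.smul_mul]⟩

theorem isSymm_mul_mul_transpose {B : Matrix m m R} (hB : B.IsSymm) (K : Matrix n m R) :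
    (K * B * Kᵀ).IsSymm := by
  rw [IsSymm, transpose_mul, transpose_mul, transpose_transpose, hB.eq, Matrix.mul_assoc]

theorem isSymm_of_mem_symmCongruence {G : Matrix n m R} {Γ : Matrix n n R}
    (hΓ : Γ ∈ symmCongruence G) : Γ.IsSymm := by
  obtain ⟨Ψ, hΨ, rfl⟩ := hΓ
  exact isSymm_mul_mul_transpose hΨ G

variable [Fintype n]

theorem compression_mem_symmCongruence {G : Matrix n m R} {K : Matrix m n R} {P B : Matrix n n R}
    (hP : P.IsSymm) (hPG : P = G * K) (hB : B.IsSymm) : P * B * P ∈ symmCongruence G := by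
  refine ⟨K * B * Kᵀ, isSymm_mul_mul_transpose hB K, ?_⟩
  -- Replacing the right-hand `P` by `Pᵀ` makes the middle factor visibly symmetric.
  calc P * B * P = P * B * Pᵀ := by rw [hP.eq]
    _ = G * (K * B * Kᵀ) * Gᵀ := by simp only [hPG, transpose_mul, Matrix.mul_assoc]

theorem compression_eq_self_of_mem_symmCongruence {G : Matrix n m R} {P Γ : Matrix n n R}
    (hP : P.IsSymm) (hPG : P * G = G) (hΓ : Γ ∈ symmCongruence G) : P * Γ * P = Γ := by
  obtain ⟨Ψ, -, rfl⟩ := hΓ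
  have hGP : Gᵀ * P = Gᵀ := by simpa only [transpose_mul, hP.eq] using congrArg transpose hPG
  calc P * (G * Ψ * Gᵀ) * P = (P * G) * Ψ * (Gᵀ * P) := by simp only [Matrix.mul_assoc]
    _ = G * Ψ * Gᵀ := by rw [hPG, hGP]

end SymmetricCongruence

section Trace

variable {R n : Type*} [Fintype n]

theorem trace_compression_mul [CommSemiring R] {P D : Matrix n n R} (hD : P * D * P = D)
    (B : Matrix n n R) : trace (P * B * P * D) = trace (B * D) := by
  calc trace (P * B * P * D) = trace (P * (B * (P * D))) := by simp only [Matrix.mul_assoc]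
    _ = trace (B * (P * D * P)) := by rw [trace_mul_comm]; simp only [Matrix.mul_assoc]
    _ = trace (B * D) := by rw [hD]

theorem trace_add_transpose_mul [CommSemiring R] {D : Matrix n n R} (hD : D.IsSymm)
    (A : Matrix n n R) : trace ((A + Aᵀ) * D) = 2 * trace (A * D) := by
  have htranspose : trace (Aᵀ * D) = trace (A * D) := by
    rw [← trace_transpose_mul, transpose_transpose, hD.eq]
  rw [Matrix.add_mul, trace_add, htranspose, two_mul]

theorem trace_sub_compression_mul_eq_zero [Field R] [NeZero (2 : R)] {P D : Matrix n n R}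
    (hD : D.IsSymm) (hPD : P * D * P = D) (A : Matrix n n R) :
    trace ((A - P * ((1 / 2 : R) • (A + Aᵀ)) * P) * D) = 0 := by
  rw [Matrix.sub_mul, trace_sub, trace_compression_mul hPD, Matrix.smul_mul, trace_smul,
    trace_add_transpose_mul hD, smul_eq_mul, one_div, inv_mul_cancel_left₀ two_ne_zero, sub_self]

end Trace

section Frobenius

variable {n : Type*} [Fintype n]

theorem frobNorm_nonneg (A : Matrix n n ℝ) : 0 ≤ frobNorm A :=
  Real.sqrt_nonneg _

theorem frobNorm_sq (A : Matrix n n ℝ) : frobNorm A ^ 2 = trace (A * Aᵀ) :=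
  Real.sq_sqrt <| by
    simpa only [conjTranspose_eq_transpose_of_trivial] using
      (posSemidef_self_mul_conjTranspose A).trace_nonneg

theorem frobNorm_add_sq_of_trace_eq_zero {E D : Matrix n n ℝ} (h : trace (E * Dᵀ) = 0) :
    frobNorm (E + D) ^ 2 = frobNorm E ^ 2 + frobNorm D ^ 2 := by
  have h' : trace (D * Eᵀ) = 0 := by
    rw [← trace_transpose, transpose_mul, transpose_transpose, h]
  simp only [frobNorm_sq, transpose_add, Matrix.add_mul, Matrix.mul_add, trace_add, h, h',
    add_zero, zero_add]

theorem frobNorm_le_frobNorm_add_of_trace_eq_zero {E D : Matrix n n ℝ}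
    (h : trace (E * Dᵀ) = 0) : frobNorm E ≤ frobNorm (E + D) := by
  refine le_of_sq_le_sq ?_ (frobNorm_nonneg _)
  rw [frobNorm_add_sq_of_trace_eq_zero h]
  exact le_add_of_nonneg_right (sq_nonneg _)

end Frobenius

theorem projection_onto_SG_general {n m : Type*} [Fintype n] [Fintype m]
    (A : Matrix n n ℝ) (G : Matrix n m ℝ) (H : Matrix m m ℝ)
    (hH : (Gᵀ * G) * H * (Gᵀ * G) = Gᵀ * G) :
    (G * H * Gᵀ) * ((1 / 2 : ℝ) • (A + Aᵀ)) * (G * H * Gᵀ) ∈ symmCongruence G ∧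
    ∀ Γ ∈ symmCongruence G,
      frobNorm (A - (G * H * Gᵀ) * ((1 / 2 : ℝ) • (A + Aᵀ)) * (G * H * Gᵀ)) ≤
        frobNorm (A - Γ) := by
  have hPG : G * H * Gᵀ * G = G := mul_mul_conjTranspose_mul_self hH
  have hP : (G * H * Gᵀ).IsSymm := isHermitian_mul_mul_conjTranspose hH
  have hmem := compression_mem_symmCongruence hP (Matrix.mul_assoc G H Gᵀ)
    ((isSymm_add_transpose_self A).smul (1 / 2 : ℝ))
  refine ⟨hmem, fun Γ hΓ => ?_⟩
  have hD := sub_mem hmem hΓ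
  have hDsymm := isSymm_of_mem_symmCongruence hD
  have horth := trace_sub_compression_mul_eq_zero hDsymm
    (compression_eq_self_of_mem_symmCongruence hP hPG hD) A
  rw [← sub_add_sub_cancel A _ Γ]
  exact frobNorm_le_frobNorm_add_of_trace_eq_zero (by rwa [hDsymm.eq])

/-- Let `H` be a reflexive generalized inverse of `GᵀG` and `Π = G H Gᵀ`.
Then `Γ̂ = Π ((A + Aᵀ)/2) Π` belongs to `S(G) = {G Ψ Gᵀ : Ψ symmetric}`
and minimizes the Frobenius distance `‖A − Γ‖` over `Γ ∈ S(G)`. -/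
theorem projection_onto_SG {p m : ℕ}
    (A : Matrix (Fin p) (Fin p) ℝ) (G : Matrix (Fin p) (Fin m) ℝ)
    (H : Matrix (Fin m) (Fin m) ℝ)
    (hH₁ : (Gᵀ * G) * H * (Gᵀ * G) = Gᵀ * G)
    (hH₂ : H * (Gᵀ * G) * H = H) :
    (∃ Ψ : Matrix (Fin m) (Fin m) ℝ, Ψᵀ = Ψ ∧
      (G * H * Gᵀ) * ((1 / 2 : ℝ) • (A + Aᵀ)) * (G * H * Gᵀ) = G * Ψ * Gᵀ) ∧
    (∀ Ψ : Matrix (Fin m) (Fin m) ℝ, Ψᵀ = Ψ →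
      frobNorm (A - (G * H * Gᵀ) * ((1 / 2 : ℝ) • (A + Aᵀ)) * (G * H * Gᵀ)) ≤
        frobNorm (A - G * Ψ * Gᵀ)) := by
  obtain ⟨hmem, hmin⟩ := projection_onto_SG_general A G H hH₁
  exact ⟨hmem, fun Ψ hΨ => hmin _ ⟨Ψ, hΨ, rfl⟩⟩
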